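/- arXiv:2012.03293 — 7 statements merged into one kernel-verified Lean document; each statement's English description precedes it below -/
import Mathlib

section
/- Fix 0 < α < 1. The closed-form allocation X* is feasible, and for every feasible allocation X, the aggregate utility satisfies Σ_{s∈S} n_s·w_s·(X_s/n_s)^{1−α}/(1−α) ≤ Σ_{s∈S} n_s·w_s·(X*_s/n_s)^{1−α}/(1−α); i.e., X* maximizes the aggregate utility over all feasible allocations. -/
open Finset Real

/-!
The utilities are concave, so each lies below its tangent line at the closed-form allocation.
The slopes of these tangent lines, `w s * (Xstar s / n s) ^ (-α)`, all equal a common positive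
value `(C / D) ^ (-α)`, where `D = ∑ n s * w s ^ (1 / α)`: this is the stationarity condition with
the Lagrange multiplier of the capacity constraint (`utility_le_tangent`). Summing the tangent
inequalities bounds the utility gain of any `X` over `Xstar` by the multiplier times
`∑ X s - ∑ Xstar s`, which is nonpositive because `Xstar` uses the whole capacity.
-/

/-- Tangent-line bound for the concave function `x ↦ x ^ (1 - α)` at `y > 0`, obtained from
Bernoulli's inequality at `x / y`. -/
theorem rpow_le_tangent {α x y : ℝ} (hα0 : 0 < α) (hα1 : α < 1) (hx : 0 ≤ x) (hy : 0 < y) :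
    x ^ (1 - α) ≤ y ^ (1 - α) + (1 - α) * y ^ (-α) * (x - y) := by
  have hxy : 0 ≤ x / y := by positivity
  have h := rpow_one_add_le_one_add_mul_self (s := x / y - 1) (by linarith)
    (p := 1 - α) (by linarith) (by linarith)
  rw [add_sub_cancel, Real.div_rpow hx hy.le, div_le_iff₀ (by positivity)] at h
  have hsplit : y ^ (1 - α) = y * y ^ (-α) := by
    rw [sub_eq_add_neg, Real.rpow_add hy, Real.rpow_one]
  refine h.trans (le_of_eq ?_)
  rw [hsplit]
  field_simp

/-- The tangent-line bound for a class of size `m` and weight `v` at the allocation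
`m * v ^ (1 / α) * k`. The slope `k ^ (-α)` does not depend on the class. -/
theorem utility_le_tangent {α m v k x : ℝ} (hα0 : 0 < α) (hα1 : α < 1) (hm : 0 < m)
    (hv : 0 < v) (hk : 0 < k) (hx : 0 ≤ x) :
    m * v * (x / m) ^ (1 - α) / (1 - α) ≤
      m * v * (m * v ^ (1 / α) * k / m) ^ (1 - α) / (1 - α) +
        k ^ (-α) * (x - m * v ^ (1 / α) * k) := by
  have hα : 0 < 1 - α := by linarith
  have hy : m * v ^ (1 / α) * k / m = v ^ (1 / α) * k := by field_simp
  rw [hy]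
  have h := rpow_le_tangent hα0 hα1 (div_nonneg hx hm.le)
    (show 0 < v ^ (1 / α) * k by positivity)
  have hslope : v * (v ^ (1 / α) * k) ^ (-α) = k ^ (-α) := by
    rw [Real.mul_rpow (by positivity) hk.le, ← Real.rpow_mul hv.le,
      show 1 / α * -α = -1 by field_simp, Real.rpow_neg_one, ← mul_assoc,
      mul_inv_cancel₀ hv.ne', one_mul]
  calc m * v * (x / m) ^ (1 - α) / (1 - α)
      ≤ m * v * ((v ^ (1 / α) * k) ^ (1 - α) +
          (1 - α) * (v ^ (1 / α) * k) ^ (-α) * (x / m - v ^ (1 / α) * k)) / (1 - α) := by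
        gcongr
    _ = m * v * (v ^ (1 / α) * k) ^ (1 - α) / (1 - α) +
          v * (v ^ (1 / α) * k) ^ (-α) * (x - m * v ^ (1 / α) * k) := by
        field_simp
    _ = _ := by rw [hslope]

/-- For 0 < α < 1, the closed-form allocation X* is feasible and maximizes
the aggregate utility over all feasible allocations. -/
theorem closed_form_maximizes_of_alpha_lt_one {ι : Type*} (S : Finset ι) (hS : S.Nonempty)
    (n w : ι → ℝ) (hn : ∀ s ∈ S, 0 < n s) (hw : ∀ s ∈ S, 0 < w s)
    (C : ℝ) (hC : 0 < C) (α : ℝ) (hα0 : 0 < α) (hα1 : α < 1)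
    (Xstar : ι → ℝ)
    (hXstar : ∀ s ∈ S,
      Xstar s = n s * (w s) ^ (1 / α) * C / (∑ s' ∈ S, n s' * (w s') ^ (1 / α))) :
    ((∀ s ∈ S, 0 ≤ Xstar s) ∧ ∑ s ∈ S, Xstar s ≤ C) ∧
    ∀ X : ι → ℝ, (∀ s ∈ S, 0 ≤ X s) → (∑ s ∈ S, X s ≤ C) →
      ∑ s ∈ S, n s * w s * (X s / n s) ^ (1 - α) / (1 - α) ≤
        ∑ s ∈ S, n s * w s * (Xstar s / n s) ^ (1 - α) / (1 - α) := by
  set D := ∑ s' ∈ S, n s' * (w s') ^ (1 / α) with hD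
  have hDpos : 0 < D := Finset.sum_pos
    (fun s hs => mul_pos (hn s hs) (Real.rpow_pos_of_pos (hw s hs) _)) hS
  have hk : 0 < C / D := by positivity
  have hX : ∀ s ∈ S, Xstar s = n s * (w s) ^ (1 / α) * (C / D) := fun s hs => by
    rw [hXstar s hs, mul_div_assoc]
  have hsum : ∑ s ∈ S, Xstar s = C := by
    rw [Finset.sum_congr rfl hX, ← Finset.sum_mul, ← hD]
    field_simp
  refine ⟨⟨fun s hs => ?_, hsum.le⟩, fun X hX0 hXC => ?_⟩
  · rw [hX s hs]
    have := hn s hs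
    have := hw s hs
    positivity
  · have hle : ∑ s ∈ S, n s * w s * (X s / n s) ^ (1 - α) / (1 - α) ≤
        ∑ s ∈ S, (n s * w s * (Xstar s / n s) ^ (1 - α) / (1 - α) +
          (C / D) ^ (-α) * (X s - Xstar s)) := by
      refine Finset.sum_le_sum fun s hs => ?_
      rw [hX s hs]
      exact utility_le_tangent hα0 hα1 (hn s hs) (hw s hs) hk (hX0 s hs)
    rw [Finset.sum_add_distrib, ← Finset.mul_sum, Finset.sum_sub_distrib, hsum] at hle
    have hgain : (C / D) ^ (-α) * (∑ s ∈ S, X s - C) ≤ 0 :=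
      mul_nonpos_of_nonneg_of_nonpos (Real.rpow_nonneg hk.le _) (by linarith)
    linarith
end

section
/- Fix 0 < α < 1. If a feasible allocation X maximizes the aggregate utility, i.e., Σ_{s∈S} n_s·w_s·(X_s/n_s)^{1−α}/(1−α) ≥ Σ_{s∈S} n_s·w_s·(Y_s/n_s)^{1−α}/(1−α) for every feasible allocation Y, then X_s = X*_s = n_s·w_s^{1/α}·C / (Σ_{s'∈S} n_{s'}·w_{s'}^{1/α}) for every s ∈ S. -/
open Finset Real

/-!
The per-class utility is strictly concave, so it lies below its tangent at the closed-form
allocation, strictly so away from the point of tangency (`class_utility_lt_tangent`, which is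
Bernoulli's inequality for an exponent in `(0, 1)`). The closed form is chosen so that all these
tangents share the slope `k ^ (-α)`, where `k = C / ∑ n w ^ (1/α)`; this slope is the Lagrange
multiplier of the capacity constraint. Summing the tangent bounds, a feasible allocation that
differs from the closed form in some class has utility strictly less than that of the closed form
plus `k ^ (-α) * (∑ X - C) ≤ 0`, so it is not a maximizer.
-/

/-- Strict tangent-line bound for `x ↦ x ^ p` with `0 < p < 1`. -/
lemma rpow_lt_tangent {p a b : ℝ} (hp0 : 0 < p) (hp1 : p < 1) (ha : 0 ≤ a) (hb : 0 < b)
    (hab : a ≠ b) : a ^ p < b ^ p + p * b ^ (p - 1) * (a - b) := by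
  -- Bernoulli's inequality at `a / b = 1 + (a / b - 1)`, scaled by `b ^ p`.
  have h := rpow_one_add_lt_one_add_mul_self (s := a / b - 1)
    (by linarith [div_nonneg ha hb.le])
    (by rw [sub_ne_zero, Ne, div_eq_one_iff_eq hb.ne']; exact hab) hp0 hp1
  rw [add_sub_cancel, div_rpow ha hb.le, div_lt_iff₀ (rpow_pos_of_pos hb p)] at h
  rw [rpow_sub_one hb.ne']
  calc a ^ p < (1 + p * (a / b - 1)) * b ^ p := h
    _ = _ := by field_simp

/-- The utility of a class of `m` flows of weight `v` lies strictly below its tangent at the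
allocation `m * v ^ (1/α) * k`. The slope `k ^ (-α)` does not depend on `m` and `v`. -/
lemma class_utility_lt_tangent {m v k α x : ℝ} (hm : 0 < m) (hv : 0 < v) (hk : 0 < k)
    (hα0 : 0 < α) (hα1 : α < 1) (hx : 0 ≤ x) (hne : x ≠ m * v ^ (1 / α) * k) :
    m * v * (x / m) ^ (1 - α) / (1 - α) <
      m * v * (m * v ^ (1 / α) * k / m) ^ (1 - α) / (1 - α) +
        k ^ (-α) * (x - m * v ^ (1 / α) * k) := by
  have hp : 0 < 1 - α := by linarith
  have hv' : 0 < v ^ (1 / α) := rpow_pos_of_pos hv _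
  have hb : 0 < v ^ (1 / α) * k := mul_pos hv' hk
  have hbm : m * v ^ (1 / α) * k / m = v ^ (1 / α) * k := by field_simp
  have hab : x / m ≠ v ^ (1 / α) * k := by
    intro h
    rw [div_eq_iff hm.ne'] at h
    exact hne (by rw [h]; ring)
  have h := rpow_lt_tangent hp (by linarith) (div_nonneg hx hm.le) hb hab
  have hslope : v * (v ^ (1 / α) * k) ^ (1 - α - 1) = k ^ (-α) := by
    have e : (1 : ℝ) / α * -α = -1 := by field_simp
    rw [show 1 - α - 1 = -α by ring, mul_rpow hv'.le hk.le, ← rpow_mul hv.le, e,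
      rpow_neg_one, mul_inv_cancel_left₀ hv.ne']
  rw [hbm, ← hslope]
  calc m * v * (x / m) ^ (1 - α) / (1 - α)
      < m * v * ((v ^ (1 / α) * k) ^ (1 - α) +
          (1 - α) * (v ^ (1 / α) * k) ^ (1 - α - 1) * (x / m - v ^ (1 / α) * k)) / (1 - α) := by
        gcongr
    _ = _ := by field_simp

/-- For 0 < α < 1, any feasible allocation maximizing the aggregate utility
must equal the closed-form allocation X*. -/
theorem maximizer_eq_closed_form_of_alpha_lt_one {ι : Type*} (S : Finset ι) (hS : S.Nonempty)
    (n w : ι → ℝ) (hn : ∀ s ∈ S, 0 < n s) (hw : ∀ s ∈ S, 0 < w s)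
    (C : ℝ) (hC : 0 < C) (α : ℝ) (hα0 : 0 < α) (hα1 : α < 1)
    (X : ι → ℝ) (hXnonneg : ∀ s ∈ S, 0 ≤ X s) (hXsum : ∑ s ∈ S, X s ≤ C)
    (hmax : ∀ Y : ι → ℝ, (∀ s ∈ S, 0 ≤ Y s) → (∑ s ∈ S, Y s ≤ C) →
      ∑ s ∈ S, n s * w s * (Y s / n s) ^ (1 - α) / (1 - α) ≤
        ∑ s ∈ S, n s * w s * (X s / n s) ^ (1 - α) / (1 - α)) :
    ∀ s ∈ S, X s = n s * (w s) ^ (1 / α) * C / (∑ s' ∈ S, n s' * (w s') ^ (1 / α)) := by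
  have hpos : ∀ s ∈ S, 0 < n s * w s ^ (1 / α) := fun s hs =>
    mul_pos (hn s hs) (rpow_pos_of_pos (hw s hs) _)
  have hZ : 0 < ∑ s' ∈ S, n s' * (w s') ^ (1 / α) := sum_pos hpos hS
  set Z := ∑ s' ∈ S, n s' * (w s') ^ (1 / α) with hZdef
  have hk : 0 < C / Z := div_pos hC hZ
  have hsum : ∑ s ∈ S, n s * w s ^ (1 / α) * (C / Z) = C := by
    rw [← sum_mul, ← hZdef, mul_div_cancel₀ _ hZ.ne']
  have hopt := hmax (fun s => n s * w s ^ (1 / α) * (C / Z))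
    (fun s hs => (mul_pos (hpos s hs) hk).le) hsum.le
  intro s hs
  rw [mul_div_assoc]
  by_contra hne
  have hlt : ∑ s ∈ S, n s * w s * (X s / n s) ^ (1 - α) / (1 - α) <
      ∑ s ∈ S, (n s * w s * (n s * w s ^ (1 / α) * (C / Z) / n s) ^ (1 - α) / (1 - α) +
        (C / Z) ^ (-α) * (X s - n s * w s ^ (1 / α) * (C / Z))) := by
    refine sum_lt_sum (fun t ht => ?_) ⟨s, hs, class_utility_lt_tangent (hn s hs) (hw s hs) hk
      hα0 hα1 (hXnonneg s hs) hne⟩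
    by_cases htne : X t = n t * w t ^ (1 / α) * (C / Z)
    · rw [htne, sub_self, mul_zero, add_zero]
    · exact (class_utility_lt_tangent (hn t ht) (hw t ht) hk hα0 hα1 (hXnonneg t ht) htne).le
  rw [sum_add_distrib, ← mul_sum, sum_sub_distrib, hsum] at hlt
  have hslack : (C / Z) ^ (-α) * (∑ s ∈ S, X s - C) ≤ 0 :=
    mul_nonpos_of_nonneg_of_nonpos (rpow_pos_of_pos hk _).le (by linarith)
  linarith
end

section
/- Fix α > 1. The closed-form allocation X* is strictly positive and feasible, and for every strictly positive feasible allocation X (X_s > 0 for all s and Σ_s X_s ≤ C), the aggregate utility satisfies Σ_{s∈S} n_s·w_s·(X_s/n_s)^{1−α}/(1−α) ≤ Σ_{s∈S} n_s·w_s·(X*_s/n_s)^{1−α}/(1−α); i.e., X* maximizes the aggregate utility over all strictly positive feasible allocations. -/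
open Finset Real

/-!
The function `x ↦ x ^ (1 - α) / (1 - α)` is concave on `(0, ∞)`, with derivative `x ^ (-α)`, so it
lies below its tangent lines (`rpow_div_le_tangent`). Write `D = ∑ n_s w_s ^ (1/α)` and `k = C / D`.
The tangent points `X*_s / n_s = w_s ^ (1/α) k` are chosen so that the marginal utility
`w_s (X*_s / n_s) ^ (-α) = k ^ (-α)` is the same for all classes. Summing the tangent inequalities
therefore bounds the gain of `X` over `X*` by `k ^ (-α) (∑ X_s - ∑ X*_s)`, which is nonpositive
because `X*` uses the whole capacity.
-/

/-- Tangent-line inequality at `y` for the concave function `x ↦ x ^ (1 - α) / (1 - α)`. -/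
lemma rpow_div_le_tangent {α x y : ℝ} (hα : 1 < α) (hx : 0 < x) (hy : 0 < y) :
    x ^ (1 - α) / (1 - α) ≤ y ^ (1 - α) / (1 - α) + y ^ (-α) * (x - y) := by
  have hp : 1 - α < 0 := by linarith
  -- The case `y = 1`, from `u + 1 ≤ exp u` and `log t ≤ t - 1`; the general case is a rescaling.
  have key : 1 + (1 - α) * (x / y - 1) ≤ (x / y) ^ (1 - α) := by
    have ht : 0 < x / y := div_pos hx hy
    rw [rpow_def_of_pos ht]
    have h1 := add_one_le_exp (log (x / y) * (1 - α))
    have h2 := log_le_sub_one_of_pos ht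
    nlinarith
  have hxy : x ^ (1 - α) = y ^ (1 - α) * (x / y) ^ (1 - α) := by
    rw [← mul_rpow hy.le (div_pos hx hy).le, mul_div_cancel₀ x hy.ne']
  have hyα : y ^ (1 - α) = y * y ^ (-α) := by
    rw [sub_eq_add_neg, rpow_add hy, rpow_one]
  have hle : y ^ (1 - α) * (1 + (1 - α) * (x / y - 1)) ≤ x ^ (1 - α) := by
    rw [hxy]
    exact mul_le_mul_of_nonneg_left key (rpow_pos_of_pos hy _).le
  calc x ^ (1 - α) / (1 - α)
      ≤ y ^ (1 - α) * (1 + (1 - α) * (x / y - 1)) / (1 - α) :=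
        div_le_div_of_nonpos_of_le hp.le hle
    _ = y ^ (1 - α) / (1 - α) + y ^ (-α) * (x - y) := by
        rw [hyα]
        have := hp.ne
        field_simp

/-- For α > 1, the closed-form allocation X* is strictly positive and feasible,
and maximizes the aggregate utility over all strictly positive feasible allocations. -/
theorem closed_form_maximizes_of_one_lt_alpha {ι : Type*} (S : Finset ι) (hS : S.Nonempty)
    (n w : ι → ℝ) (hn : ∀ s ∈ S, 0 < n s) (hw : ∀ s ∈ S, 0 < w s)
    (C : ℝ) (hC : 0 < C) (α : ℝ) (hα : 1 < α)
    (Xstar : ι → ℝ)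
    (hXstar : ∀ s ∈ S,
      Xstar s = n s * (w s) ^ (1 / α) * C / (∑ s' ∈ S, n s' * (w s') ^ (1 / α))) :
    ((∀ s ∈ S, 0 < Xstar s) ∧ ∑ s ∈ S, Xstar s ≤ C) ∧
    ∀ X : ι → ℝ, (∀ s ∈ S, 0 < X s) → (∑ s ∈ S, X s ≤ C) →
      ∑ s ∈ S, n s * w s * (X s / n s) ^ (1 - α) / (1 - α) ≤
        ∑ s ∈ S, n s * w s * (Xstar s / n s) ^ (1 - α) / (1 - α) := by
  have hD : 0 < ∑ s' ∈ S, n s' * (w s') ^ (1 / α) :=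
    sum_pos (fun s hs => mul_pos (hn s hs) (rpow_pos_of_pos (hw s hs) _)) hS
  have hsum : ∑ s ∈ S, Xstar s = C := by
    rw [sum_congr rfl hXstar, ← sum_div, ← sum_mul]
    exact mul_div_cancel_left₀ C hD.ne'
  have hpos : ∀ s ∈ S, 0 < Xstar s := fun s hs => by
    rw [hXstar s hs]
    exact div_pos (mul_pos (mul_pos (hn s hs) (rpow_pos_of_pos (hw s hs) _)) hC) hD
  refine ⟨⟨hpos, hsum.le⟩, fun X hX hXC => ?_⟩
  set D := ∑ s' ∈ S, n s' * (w s') ^ (1 / α)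
  have hk : 0 < C / D := div_pos hC hD
  have hmarginal : ∀ s ∈ S, w s * (Xstar s / n s) ^ (-α) = (C / D) ^ (-α) := fun s hs => by
    have hws := hw s hs
    have hns := (hn s hs).ne'
    have hα0 : α ≠ 0 := by linarith
    have hy : Xstar s / n s = (w s) ^ (1 / α) * (C / D) := by
      rw [hXstar s hs]
      field_simp
    have he : 1 / α * -α = -1 := by field_simp
    rw [hy, mul_rpow (rpow_pos_of_pos hws _).le hk.le, ← rpow_mul hws.le, he, rpow_neg_one,
      mul_inv_cancel_left₀ hws.ne']
  have hterm : ∀ s ∈ S, n s * w s * (X s / n s) ^ (1 - α) / (1 - α) ≤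
      n s * w s * (Xstar s / n s) ^ (1 - α) / (1 - α) + (C / D) ^ (-α) * (X s - Xstar s) := by
    intro s hs
    have hns := hn s hs
    have htan := mul_le_mul_of_nonneg_left
      (rpow_div_le_tangent hα (div_pos (hX s hs) hns) (div_pos (hpos s hs) hns))
      (mul_pos hns (hw s hs)).le
    have hdiff : n s * (X s / n s - Xstar s / n s) = X s - Xstar s := by
      field_simp
    rw [← hmarginal s hs, ← hdiff, mul_div_assoc, mul_div_assoc]
    linarith
  refine (sum_le_sum hterm).trans ?_
  rw [sum_add_distrib, ← mul_sum, sum_sub_distrib, hsum]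
  have := mul_nonpos_of_nonneg_of_nonpos (rpow_pos_of_pos hk (-α)).le (sub_nonpos.2 hXC)
  linarith
end

section
/- Fix α > 1. If a strictly positive feasible allocation X (X_s > 0 for all s and Σ_s X_s ≤ C) maximizes the aggregate utility over all strictly positive feasible allocations, i.e., Σ_{s∈S} n_s·w_s·(X_s/n_s)^{1−α}/(1−α) ≥ Σ_{s∈S} n_s·w_s·(Y_s/n_s)^{1−α}/(1−α) for every strictly positive feasible Y, then X_s = X*_s = n_s·w_s^{1/α}·C / (Σ_{s'∈S} n_{s'}·w_{s'}^{1/α}) for every s ∈ S. -/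
/-!
Put `k = C / ∑ n w^(1/α)`, so that the closed form is `X* = n w^(1/α) k`. At `X*` all marginal
utilities `w (X*/n)^(-α)` equal the common value `k^(-α)`, the Lagrange multiplier of the capacity
constraint. Strict concavity of the utility (`rpow_div_lt_tangent`) puts each class's utility at
`X` below its tangent at `X*` (`utility_le_tangent`), strictly where `X s ≠ X* s`. Summing, the
linear terms contribute `k^(-α) (∑ X - C) ≤ 0`, so any `X ≠ X*` has strictly smaller aggregate
utility than the feasible allocation `X*`.
-/

open Finset Real

/-- Strict concavity of `y ↦ y^(1-α)/(1-α)`, compared with its tangent at `1`. -/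
lemma rpow_div_lt_tangent {α y : ℝ} (hα : 1 < α) (hy : 0 < y) (hy1 : y ≠ 1) :
    y ^ (1 - α) / (1 - α) < 1 / (1 - α) + (y - 1) := by
  -- Bernoulli's inequality at `y⁻¹` with exponent `α`; multiplying by `y` gives exponent `1 - α`.
  have hB := one_add_mul_self_lt_rpow_one_add (s := y⁻¹ - 1) (p := α)
    (by have := inv_pos.2 hy; linarith) (by simpa [sub_eq_zero] using hy1) hα
  rw [add_sub_cancel, inv_rpow hy.le, ← rpow_neg hy.le] at hB
  have h1 := mul_lt_mul_of_pos_left hB hy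
  have h2 : y * y ^ (-α) = y ^ (1 - α) := by
    rw [sub_eq_add_neg, rpow_add hy, rpow_one]
  have h3 : y * (1 + α * (y⁻¹ - 1)) = 1 + (1 - α) * (y - 1) := by
    field_simp
    ring
  rw [h2, h3] at h1
  have hneg : 1 - α < 0 := by linarith
  have h4 : 1 / (1 - α) + (y - 1) = (1 + (1 - α) * (y - 1)) / (1 - α) := by
    field_simp [hneg.ne]
  rw [h4]
  exact div_lt_div_of_neg_of_lt hneg h1

/-- Utility at the multiple `y` of the closed-form allocation `n w^(1/α) k`. The parameters `n`, `w`
enter only through that allocation, which reflects that its marginal utility is `k^(-α)`. -/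
lemma utility_scaled {n w k α y : ℝ} (hn : 0 < n) (hw : 0 < w) (hk : 0 < k) (hα : 1 < α)
    (hy : 0 < y) :
    n * w * ((n * w ^ (1 / α) * k * y) / n) ^ (1 - α) / (1 - α) =
      k ^ (-α) * (n * w ^ (1 / α) * k) * (y ^ (1 - α) / (1 - α)) := by
  have hv : 0 < w ^ (1 / α) := rpow_pos_of_pos hw _
  have hwv : w * (w ^ (1 / α)) ^ (1 - α) = w ^ (1 / α) := by
    rw [← rpow_mul hw.le]
    nth_rewrite 1 [← rpow_one w]
    rw [← rpow_add hw]
    congr 1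
    field_simp
    ring
  have hk' : k ^ (1 - α) = k * k ^ (-α) := by rw [sub_eq_add_neg, rpow_add hk, rpow_one]
  have hdiv : n * w ^ (1 / α) * k * y / n = w ^ (1 / α) * k * y := by field_simp
  rw [hdiv, mul_rpow (by positivity) hy.le, mul_rpow hv.le hk.le, hk']
  linear_combination (n * (k * k ^ (-α)) * y ^ (1 - α) / (1 - α)) * hwv

/-- The tangent to the utility at the closed-form allocation `n w^(1/α) k`, whose slope is
`k^(-α)`, lies above the utility, strictly so away from the point of tangency. -/
lemma utility_le_tangent_s3 {n w k α x : ℝ} (hn : 0 < n) (hw : 0 < w) (hk : 0 < k) (hα : 1 < α)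
    (hx : 0 < x) :
    n * w * (x / n) ^ (1 - α) / (1 - α) ≤
        n * w * (n * w ^ (1 / α) * k / n) ^ (1 - α) / (1 - α) +
          k ^ (-α) * (x - n * w ^ (1 / α) * k) ∧
      (x ≠ n * w ^ (1 / α) * k →
        n * w * (x / n) ^ (1 - α) / (1 - α) <
          n * w * (n * w ^ (1 / α) * k / n) ^ (1 - α) / (1 - α) +
            k ^ (-α) * (x - n * w ^ (1 / α) * k)) := by
  have hv : 0 < w ^ (1 / α) := rpow_pos_of_pos hw _
  have hz : 0 < n * w ^ (1 / α) * k := by positivity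
  have hstrict : x ≠ n * w ^ (1 / α) * k →
      n * w * (x / n) ^ (1 - α) / (1 - α) <
        n * w * (n * w ^ (1 / α) * k / n) ^ (1 - α) / (1 - α) +
          k ^ (-α) * (x - n * w ^ (1 / α) * k) := by
    intro hne
    obtain ⟨y, rfl⟩ : ∃ y, x = n * w ^ (1 / α) * k * y :=
      ⟨x / (n * w ^ (1 / α) * k), by field_simp⟩
    have hy : 0 < y := pos_of_mul_pos_right hx hz.le
    have hy1 : y ≠ 1 := by
      rintro rfl
      exact hne (mul_one _)
    have h1 := utility_scaled hn hw hk hα hy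
    have h2 := utility_scaled hn hw hk hα one_pos
    rw [mul_one, one_rpow] at h2
    rw [h1, h2]
    have hc : 0 < k ^ (-α) * (n * w ^ (1 / α) * k) := mul_pos (rpow_pos_of_pos hk _) hz
    have := mul_lt_mul_of_pos_left (rpow_div_lt_tangent hα hy hy1) hc
    linarith
  refine ⟨?_, hstrict⟩
  by_cases hne : x = n * w ^ (1 / α) * k
  · rw [hne]
    simp
  · exact (hstrict hne).le

/-- For α > 1, any strictly positive feasible allocation maximizing the aggregate
utility over all strictly positive feasible allocations must equal the closed-form allocation. -/
theorem maximizer_eq_closed_form_of_one_lt_alpha {ι : Type*} (S : Finset ι) (hS : S.Nonempty)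
    (n w : ι → ℝ) (hn : ∀ s ∈ S, 0 < n s) (hw : ∀ s ∈ S, 0 < w s)
    (C : ℝ) (hC : 0 < C) (α : ℝ) (hα : 1 < α)
    (X : ι → ℝ) (hXpos : ∀ s ∈ S, 0 < X s) (hXsum : ∑ s ∈ S, X s ≤ C)
    (hmax : ∀ Y : ι → ℝ, (∀ s ∈ S, 0 < Y s) → (∑ s ∈ S, Y s ≤ C) →
      ∑ s ∈ S, n s * w s * (Y s / n s) ^ (1 - α) / (1 - α) ≤
        ∑ s ∈ S, n s * w s * (X s / n s) ^ (1 - α) / (1 - α)) :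
    ∀ s ∈ S, X s = n s * (w s) ^ (1 / α) * C / (∑ s' ∈ S, n s' * (w s') ^ (1 / α)) := by
  have hv : ∀ s ∈ S, 0 < n s * w s ^ (1 / α) := fun s hs =>
    mul_pos (hn s hs) (rpow_pos_of_pos (hw s hs) _)
  have hD : 0 < ∑ s' ∈ S, n s' * w s' ^ (1 / α) := sum_pos hv hS
  set D := ∑ s' ∈ S, n s' * w s' ^ (1 / α) with hDdef
  have hk : 0 < C / D := div_pos hC hD
  have hsum : ∑ s ∈ S, n s * w s ^ (1 / α) * (C / D) = C := by
    rw [← sum_mul, ← hDdef]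
    field_simp
  have hopt := hmax (fun s => n s * w s ^ (1 / α) * (C / D))
    (fun s hs => mul_pos (hv s hs) hk) hsum.le
  intro s hs
  rw [mul_div_assoc]
  by_contra hne
  have hlt := sum_lt_sum
    (fun i hi => (utility_le_tangent_s3 (hn i hi) (hw i hi) hk hα (hXpos i hi)).1)
    ⟨s, hs, (utility_le_tangent_s3 (hn s hs) (hw s hs) hk hα (hXpos s hs)).2 hne⟩
  rw [sum_add_distrib, ← mul_sum, sum_sub_distrib, hsum] at hlt
  have hslack : (C / D) ^ (-α) * (∑ i ∈ S, X i - C) ≤ 0 :=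
    mul_nonpos_of_nonneg_of_nonpos (rpow_nonneg hk.le _) (by linarith)
  linarith
end

section
/- (Theorem 2, part 1, capacity bound) Suppose β ≤ 0, γ ∈ [0,1], F^L(β) is nonempty, F^− is nonempty, and the aggregate achieved throughput does not exceed the allocated capacity, i.e., Σ_{f∈F} x_f ≤ X. Then the average achieved throughput of the lower sub-class is no higher than the per-flow capacity re-allocated to it: (Σ_{f∈F^L(β)} x_f)/|F^L(β)| ≤ c^L(β,γ). -/
open Finset Real

/-!
Since `σ > 0`, the condition `z f < β` is the threshold condition `x f < xbar + β * σ`, so the lower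
sub-class consists of the smallest throughputs of `F`. As `β ≤ 0`, it also lies inside the set of
flows below the mean and consists of its smallest throughputs. The average over a bottom segment is
at most the average over the whole set (`avg_le_avg_of_threshold`). Hence the average of the lower
sub-class is at most both the average of the below-mean flows and `xbar ≤ X / n`, and so at most
their convex combination with weights `γ` and `1 - γ`.
-/

/-- If a threshold `t` separates the values of `x` on a nonempty `S ⊆ T` from those on `T \ S`,
then the average over the lower part `S` is at most the average over `T`. -/
lemma avg_le_avg_of_threshold {ι : Type*} [DecidableEq ι] {S T : Finset ι} (x : ι → ℝ) (t : ℝ)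
    (hST : S ⊆ T) (hS : S.Nonempty) (hle : ∀ f ∈ S, x f ≤ t) (hge : ∀ f ∈ T \ S, t ≤ x f) :
    (∑ f ∈ S, x f) / S.card ≤ (∑ f ∈ T, x f) / T.card := by
  have hs : (0 : ℝ) < S.card := by exact_mod_cast hS.card_pos
  have ht : (0 : ℝ) < T.card := by exact_mod_cast (hS.mono hST).card_pos
  have hsum : ∑ f ∈ T \ S, x f + ∑ f ∈ S, x f = ∑ f ∈ T, x f := Finset.sum_sdiff hST
  have hcard : ((T \ S).card : ℝ) + S.card = T.card := by
    exact_mod_cast Finset.card_sdiff_add_card_eq_card hST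
  have h1 : ∑ f ∈ S, x f ≤ S.card * t := by
    simpa using Finset.sum_le_card_nsmul S x t hle
  have h2 : (T \ S).card * t ≤ ∑ f ∈ T \ S, x f := by
    simpa using Finset.card_nsmul_le_sum (T \ S) x t hge
  rw [div_le_div_iff₀ hs ht, ← hsum, ← hcard]
  have h3 := mul_le_mul_of_nonneg_right h1 (Nat.cast_nonneg (α := ℝ) (T \ S).card)
  have h4 := mul_le_mul_of_nonneg_right h2 hs.le
  linarith

/-- Theorem 2, part 1, capacity bound: for β ≤ 0, γ ∈ [0,1], nonempty F^L(β)
and F^−, and Σ x_f ≤ X, the average achieved throughput of the lower sub-class is no higher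
than the per-flow capacity c^L(β,γ) re-allocated to it. -/
theorem lower_subclass_avg_le_realloc {ι : Type*} [DecidableEq ι]
    (F : Finset ι) (hF : F.Nonempty)
    (x : ι → ℝ) (hx : ∀ f ∈ F, 0 < x f)
    (X : ℝ) (hX : 0 < X)
    (xbar σ : ℝ)
    (hxbar : xbar = (∑ f ∈ F, x f) / F.card)
    (hσ : σ = Real.sqrt ((∑ f ∈ F, (x f - xbar) ^ 2) / F.card))
    (hσpos : 0 < σ)
    (z : ι → ℝ) (hz : ∀ f, z f = (x f - xbar) / σ)
    (β : ℝ) (hβ : β ≤ 0)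
    (γ : ℝ) (hγ0 : 0 ≤ γ) (hγ1 : γ ≤ 1)
    (hL : (F.filter (fun f => z f < β)).Nonempty)
    (hminus : (F.filter (fun f => x f < xbar)).Nonempty)
    (hcap : ∑ f ∈ F, x f ≤ X) :
    (∑ f ∈ F.filter (fun f => z f < β), x f) / (F.filter (fun f => z f < β)).card ≤
      γ * ((∑ f ∈ F.filter (fun f => x f < xbar), x f) /
            (F.filter (fun f => x f < xbar)).card) +
        (1 - γ) * (X / F.card) := by
  have hiff : ∀ f, z f < β ↔ x f < xbar + β * σ := fun f => by
    rw [hz, div_lt_iff₀ hσpos, sub_lt_iff_lt_add']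
  have hthr : xbar + β * σ ≤ xbar := by
    linarith [mul_nonpos_of_nonpos_of_nonneg hβ hσpos.le]
  have hle : ∀ f ∈ F.filter (fun f => z f < β), x f ≤ xbar + β * σ := fun f hf =>
    ((hiff f).1 (Finset.mem_filter.1 hf).2).le
  have hge : ∀ f ∈ F, f ∉ F.filter (fun f => z f < β) → xbar + β * σ ≤ x f := by
    intro f hf hn
    by_contra! hlt
    exact hn (Finset.mem_filter.2 ⟨hf, (hiff f).2 hlt⟩)
  have hA := avg_le_avg_of_threshold (T := F.filter (fun f => x f < xbar)) x (xbar + β * σ)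
    (Finset.monotone_filter_right F fun f _ h => ((hiff f).1 h).trans_le hthr) hL hle
    (fun f hf => hge f (Finset.mem_filter.1 (Finset.mem_sdiff.1 hf).1).1 (Finset.mem_sdiff.1 hf).2)
  have hB := avg_le_avg_of_threshold (T := F) x (xbar + β * σ) (Finset.filter_subset _ _) hL hle
    (fun f hf => hge f (Finset.mem_sdiff.1 hf).1 (Finset.mem_sdiff.1 hf).2)
  have hC : (∑ f ∈ F, x f) / F.card ≤ X / F.card := by gcongr
  have h1 := mul_le_mul_of_nonneg_left hA hγ0
  have h2 := mul_le_mul_of_nonneg_left (hB.trans hC) (sub_nonneg.2 hγ1)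
  linarith
end

section
/- (Theorem 2, part 2, monotonicity) Suppose γ ∈ [0,1], F^− is nonempty, and Σ_{f∈F} x_f ≤ X. If β₁ ≤ β₂ ≤ 0 and F^H(β₂) is nonempty, then the per-flow capacity re-allocated to the upper sub-class is non-decreasing in the threshold: c^H(β₁,γ) ≤ c^H(β₂,γ). -/
/-!
Write `n` for the number of flows and `a` for the size of the lower sub-class. Since
`(X - a c) / (n - a) = c + (X - n c) / (n - a)`, the per-flow capacity of the upper sub-class is
non-decreasing in `a < n` as soon as `n c ≤ X` (`residual_share_mono`). Raising the threshold only
enlarges the lower sub-class. The bound `c ≤ X / n` holds because `c` is a convex combination of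
`X / n` and the mean throughput of the flows below the mean, which is at most
`xbar = (∑ x f) / n ≤ X / n`.
-/

open Finset Real

/-- If each of `a` members receives a share `c` at most the equal share `X / n`, what is left for
each of the other `n - a` members does not decrease when `a` grows. -/
lemma residual_share_mono {X c n a b : ℝ} (hc : c * n ≤ X) (hab : a ≤ b) (hbn : b < n) :
    (X - a * c) / (n - a) ≤ (X - b * c) / (n - b) := by
  rw [div_le_div_iff₀ (by linarith) (by linarith)]
  -- The two cross products differ by exactly `(b - a) * (X - c * n)`.
  nlinarith [mul_nonneg (sub_nonneg.2 hab) (sub_nonneg.2 hc)]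

/-- The average of a function over a nonempty finite set on which it stays below `m` is at most
`m`. -/
lemma average_filter_lt_le {ι : Type*} (F : Finset ι) (x : ι → ℝ) (m : ℝ)
    (h : (F.filter (fun f => x f < m)).Nonempty) :
    (∑ f ∈ F.filter (fun f => x f < m), x f) / (F.filter (fun f => x f < m)).card ≤ m := by
  have hpos : (0 : ℝ) < (F.filter (fun f => x f < m)).card := by exact_mod_cast h.card_pos
  rw [div_le_iff₀ hpos, mul_comm, ← nsmul_eq_mul]
  exact Finset.sum_le_card_nsmul _ _ _ fun f hf => (Finset.mem_filter.1 hf).2.le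


/-- Theorem 2, part 2, monotonicity: for γ ∈ [0,1], nonempty F^−, Σ x_f ≤ X,
β₁ ≤ β₂ ≤ 0 and nonempty F^H(β₂), the per-flow capacity re-allocated to the upper sub-class
is non-decreasing in the threshold: c^H(β₁,γ) ≤ c^H(β₂,γ). -/
theorem upper_subclass_capacity_monotone {ι : Type*} [DecidableEq ι]
    (F : Finset ι) (hF : F.Nonempty)
    (x : ι → ℝ) (hx : ∀ f ∈ F, 0 < x f)
    (X : ℝ) (hX : 0 < X)
    (xbar σ : ℝ)
    (hxbar : xbar = (∑ f ∈ F, x f) / F.card)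
    (hσ : σ = Real.sqrt ((∑ f ∈ F, (x f - xbar) ^ 2) / F.card))
    (hσpos : 0 < σ)
    (z : ι → ℝ) (hz : ∀ f, z f = (x f - xbar) / σ)
    (γ : ℝ) (hγ0 : 0 ≤ γ) (hγ1 : γ ≤ 1)
    (hminus : (F.filter (fun f => x f < xbar)).Nonempty)
    (hcap : ∑ f ∈ F, x f ≤ X)
    (β₁ β₂ : ℝ) (hβ12 : β₁ ≤ β₂) (hβ2 : β₂ ≤ 0)
    (hH2 : (F \ F.filter (fun f => z f < β₂)).Nonempty)
    (cL : ℝ)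
    (hcL : cL = γ * ((∑ f ∈ F.filter (fun f => x f < xbar), x f) /
            (F.filter (fun f => x f < xbar)).card) + (1 - γ) * (X / F.card)) :
    (X - (F.filter (fun f => z f < β₁)).card * cL) /
        (F \ F.filter (fun f => z f < β₁)).card ≤
      (X - (F.filter (fun f => z f < β₂)).card * cL) /
        (F \ F.filter (fun f => z f < β₂)).card := by
  have hn : (0 : ℝ) < F.card := by exact_mod_cast hF.card_pos
  have hmean : xbar ≤ X / F.card := by
    rw [hxbar]
    gcongr
  have hc : cL * F.card ≤ X := by
    rw [← le_div_iff₀ hn, hcL]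
    have havg := (average_filter_lt_le F x xbar hminus).trans hmean
    nlinarith [mul_le_mul_of_nonneg_left havg hγ0]
  have hsub : F.filter (fun f => z f < β₁) ⊆ F.filter (fun f => z f < β₂) :=
    Finset.monotone_filter_right F fun f _ hf => lt_of_lt_of_le hf hβ12
  have hupper : ∀ β : ℝ, ((F \ F.filter (fun f => z f < β)).card : ℝ)
      = F.card - (F.filter (fun f => z f < β)).card := fun β =>
    Finset.cast_card_sdiff (Finset.filter_subset _ F)
  have hH2pos : (0 : ℝ) < (F \ F.filter (fun f => z f < β₂)).card := by
    exact_mod_cast hH2.card_pos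
  rw [hupper] at hH2pos
  rw [hupper, hupper]
  exact residual_share_mono hc (by exact_mod_cast Finset.card_le_card hsub) (by linarith)
end

section
/- (Theorem 2, part 2, lower bound) Suppose γ ∈ [0,1], β ≤ 0, F^− is nonempty, F^H(β) is nonempty, and Σ_{f∈F} x_f ≤ X. Then the per-flow capacity re-allocated to the upper sub-class is at least the class-wide average per-flow capacity: c^H(β,γ) ≥ X/n. -/
/-! The mean throughput over the flows below the mean is at most `xbar`, and `xbar ≤ X / n` because
`∑ x_f ≤ X`. Hence `cL`, a convex combination of that mean and `X / n`, is at most `X / n`. Giving the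
lower sub-class at most the class-wide average per flow leaves at least that average per flow for
the nonempty upper sub-class. -/

open Finset Real

/-- Theorem 2, part 2, lower bound: for γ ∈ [0,1], β ≤ 0, nonempty F^− and
F^H(β), and Σ x_f ≤ X, the per-flow capacity re-allocated to the upper sub-class is at least
the class-wide average per-flow capacity: c^H(β,γ) ≥ X/n. -/
theorem upper_subclass_capacity_lower_bound {ι : Type*} [DecidableEq ι]
    (F : Finset ι) (hF : F.Nonempty)
    (x : ι → ℝ) (hx : ∀ f ∈ F, 0 < x f)
    (X : ℝ) (hX : 0 < X)
    (xbar σ : ℝ)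
    (hxbar : xbar = (∑ f ∈ F, x f) / F.card)
    (hσ : σ = Real.sqrt ((∑ f ∈ F, (x f - xbar) ^ 2) / F.card))
    (hσpos : 0 < σ)
    (z : ι → ℝ) (hz : ∀ f, z f = (x f - xbar) / σ)
    (γ : ℝ) (hγ0 : 0 ≤ γ) (hγ1 : γ ≤ 1)
    (β : ℝ) (hβ : β ≤ 0)
    (hminus : (F.filter (fun f => x f < xbar)).Nonempty)
    (hH : (F \ F.filter (fun f => z f < β)).Nonempty)
    (hcap : ∑ f ∈ F, x f ≤ X)
    (cL : ℝ)
    (hcL : cL = γ * ((∑ f ∈ F.filter (fun f => x f < xbar), x f) /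
            (F.filter (fun f => x f < xbar)).card) + (1 - γ) * (X / F.card)) :
    X / F.card ≤
      (X - (F.filter (fun f => z f < β)).card * cL) /
        (F \ F.filter (fun f => z f < β)).card := by
  have hn : (0 : ℝ) < F.card := by exact_mod_cast hF.card_pos
  have hm : (0 : ℝ) < (F.filter (fun f => x f < xbar)).card := by exact_mod_cast hminus.card_pos
  have hh : (0 : ℝ) < (F \ F.filter (fun f => z f < β)).card := by exact_mod_cast hH.card_pos
  have hmean : (∑ f ∈ F.filter (fun f => x f < xbar), x f) /
      (F.filter (fun f => x f < xbar)).card ≤ xbar := by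
    rw [div_le_iff₀ hm, mul_comm, ← nsmul_eq_mul]
    exact Finset.sum_le_card_nsmul _ _ _ fun f hf => (Finset.mem_filter.mp hf).2.le
  have hxX : xbar ≤ X / F.card := by
    rw [hxbar]
    gcongr
  have hcLle : cL ≤ X / F.card := by
    rw [hcL]
    linarith [mul_le_mul_of_nonneg_left (hmean.trans hxX) hγ0]
  have hcard : ((F \ F.filter (fun f => z f < β)).card : ℝ) +
      (F.filter (fun f => z f < β)).card = F.card := by
    exact_mod_cast Finset.card_sdiff_add_card_eq_card (Finset.filter_subset _ F)
  have hmul : X / F.card * F.card = X := div_mul_cancel₀ X hn.ne'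
  rw [le_div_iff₀ hh]
  rw [← hcard, mul_add, hcard] at hmul
  linarith [mul_le_mul_of_nonneg_left hcLle
    (Nat.cast_nonneg (α := ℝ) (F.filter (fun f => z f < β)).card)]
end
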